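/- arXiv:2505.08023 — 2 statements merged into one kernel-verified Lean document; each statement's English description precedes it below -/
import Mathlib

section
/- Let λ > 0 and let w : [0,T) × ℝ → ℝ be a C² solution of ∂ₜₜw − (1 + (∂ₓw)²)·∂ₓₓw = −λ·∂ₜw with ∂ₜw(0,·) ≡ 0. Assume that for every t ∈ [0,T): w(t,·), ∂ₜw(t,·), ∂ₜₜw(t,·) and x ↦ ∂ₓ(∂ₓw + (1/3)(∂ₓw)³)(t,x) are integrable over ℝ; M(t) := ∫_ℝ w(t,x) dx is twice differentiable with M'(t) = ∫_ℝ ∂ₜw(t,x) dx and M''(t) = ∫_ℝ ∂ₜₜw(t,x) dx; and the limits as x → +∞ and as x → −∞ of ∂ₓw(t,x)·(1 + (1/3)(∂ₓw(t,x))²) exist and are equal to each other. Then the mass is conserved: M(t) = M(0) for every t ∈ [0,T). -/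
open Real Set Filter MeasureTheory

noncomputable section

/-- `L(u) = (1/2)(u·√(1+u²) + arcsinh u)`, the antiderivative of `Q(ξ) = √(1+ξ²)` with `L 0 = 0`. -/
def Lfun (u : ℝ) : ℝ := (1/2) * (u * Real.sqrt (1 + u^2) + Real.arsinh u)

/-- `û₁(η) = L⁻¹(−η/2)`. -/
def u1hat (η : ℝ) : ℝ := Function.invFun Lfun (-η/2)

/-- `k(η) = √(1 + û₁(η)²)`. -/
def kfun (η : ℝ) : ℝ := Real.sqrt (1 + (u1hat η)^2)

/-- `f(η) = k'(η)/√(k(η))`. -/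
def ffun (η : ℝ) : ℝ := deriv kfun η / Real.sqrt (kfun η)

/-- `A(t) = exp(λ t / 2)`. -/
def Afun (lam t : ℝ) : ℝ := Real.exp (lam * t / 2)

/-- `∂ₜw`. -/
def wt (w : ℝ → ℝ → ℝ) (t x : ℝ) : ℝ := deriv (fun s => w s x) t

/-- `∂ₓw`. -/
def wx (w : ℝ → ℝ → ℝ) (t x : ℝ) : ℝ := deriv (fun y => w t y) x

/-- `∂ₜₜw`. -/
def wtt (w : ℝ → ℝ → ℝ) (t x : ℝ) : ℝ := deriv (fun s => wt w s x) t

/-- `∂ₜ∂ₓw`. -/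
def wtx (w : ℝ → ℝ → ℝ) (t x : ℝ) : ℝ := deriv (fun s => wx w s x) t

/-- `∂ₓₓw`. -/
def wxx (w : ℝ → ℝ → ℝ) (t x : ℝ) : ℝ := deriv (fun y => wx w t y) x

/-!
The equation is in divergence form, `∂ₜₜw = ∂ₓ(F(∂ₓw)) − λ ∂ₜw`, so integrating in `x` leaves only
the difference of the limits of the flux `F(∂ₓw)` at `±∞`, which vanishes. Hence `M'' = −λ M'`, and
`M' 0 = 0` forces `M' = 0` by Grönwall.
-/

section Calculus

variable {E F G : Type*} [NormedAddCommGroup E] [NormedSpace ℝ E] [NormedAddCommGroup F]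
  [NormedSpace ℝ F] [NormedAddCommGroup G] [NormedSpace ℝ G]

theorem eq_of_hasDerivWithinAt_zero {f : ℝ → E} {s : Set ℝ} (hs : Convex ℝ s)
    (hf : ∀ t ∈ s, HasDerivWithinAt f 0 s t) {a b : ℝ} (ha : a ∈ s) (hb : b ∈ s) :
    f b = f a := by
  have hle : ‖f b - f a‖ ≤ 0 * ‖b - a‖ :=
    hs.norm_image_sub_le_of_norm_hasDerivWithin_le hf (fun _ _ => norm_zero.le) ha hb
  rwa [zero_mul, norm_le_zero_iff, sub_eq_zero] at hle

theorem eq_zero_of_hasDerivWithinAt_smul_self {f : ℝ → E} {k a b : ℝ}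
    (hf : ∀ t ∈ Ico a b, HasDerivWithinAt f (k • f t) (Ico a b) t) (ha : f a = 0) :
    ∀ t ∈ Ico a b, f t = 0 := by
  intro t ht
  have hcont : ContinuousOn f (Icc a t) := fun s hs =>
    (hf s ⟨hs.1, hs.2.trans_lt ht.2⟩).continuousWithinAt.mono (Icc_subset_Ico_right ht.2)
  have hright : ∀ s ∈ Ico a t, HasDerivWithinAt f (k • f s) (Ici s) s := fun s hs =>
    have hsb : s < b := hs.2.trans ht.2
    (hf s ⟨hs.1, hsb⟩).mono_of_mem_nhdsWithin <|
      mem_of_superset (Ico_mem_nhdsGE hsb) (Ico_subset_Ico_left hs.1)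
  exact eq_zero_of_abs_deriv_le_mul_abs_self_of_eq_zero_right hcont hright ha
    (fun s _ => (norm_smul k (f s)).le) t ⟨ht.1, le_rfl⟩

theorem contDiff_slice {n : WithTop ℕ∞} {u : E → F → G} {s : Set E}
    (hu : ContDiffOn ℝ n (Function.uncurry u) (s ×ˢ univ)) {t : E} (ht : t ∈ s) :
    ContDiff ℝ n (u t) :=
  contDiffOn_univ.1 <| hu.comp (contDiff_prodMk_right t).contDiffOn fun x _ => ⟨ht, mem_univ x⟩

end Calculus

section DampedWave

variable {w : ℝ → ℝ → ℝ} {F F' : ℝ → ℝ} {lam t c : ℝ}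

theorem hasDerivAt_wx (hw : ContDiff ℝ 2 (w t)) (x : ℝ) : HasDerivAt (wx w t) (wxx w t x) x :=
  (((contDiff_succ_iff_deriv (n := 1)).1 hw).2.2.differentiable one_ne_zero x).hasDerivAt

theorem integral_wtt_eq_neg_mul_integral_wt (hw : ContDiff ℝ 2 (w t))
    (hF : ∀ ξ, HasDerivAt F (F' ξ) ξ)
    (hpde : ∀ x, wtt w t x - F' (wx w t x) * wxx w t x = -lam * wt w t x)
    (hint_wt : Integrable (wt w t)) (hint_flux : Integrable (deriv fun x => F (wx w t x)))
    (htop : Tendsto (fun x => F (wx w t x)) atTop (nhds c))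
    (hbot : Tendsto (fun x => F (wx w t x)) atBot (nhds c)) :
    ∫ x, wtt w t x = -lam * ∫ x, wt w t x := by
  have hflux (x : ℝ) : HasDerivAt (fun y => F (wx w t y)) (F' (wx w t x) * wxx w t x) x :=
    (hF _).comp x (hasDerivAt_wx hw x)
  have hflux_zero : ∫ x, deriv (fun y => F (wx w t y)) x = 0 := by
    rw [integral_of_hasDerivAt_of_tendsto (fun x => (hflux x).differentiableAt.hasDerivAt)
      hint_flux hbot htop, sub_self]
  calc ∫ x, wtt w t x
      = ∫ x, (deriv (fun y => F (wx w t y)) x + -lam * wt w t x) := by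
        congr with x
        rw [(hflux x).deriv, ← hpde x, add_sub_cancel]
    _ = -lam * ∫ x, wt w t x := by
        rw [integral_add hint_flux (hint_wt.const_mul _), hflux_zero, zero_add,
          integral_const_mul]

end DampedWave

theorem mass_conservation_general {lam T : ℝ} {w : ℝ → ℝ → ℝ} {F F' : ℝ → ℝ}
    (hF : ∀ ξ, HasDerivAt F (F' ξ) ξ)
    (hreg : ContDiffOn ℝ 2 (Function.uncurry w) (Ico 0 T ×ˢ univ))
    (hpde : ∀ t ∈ Ico 0 T, ∀ x, wtt w t x - F' (wx w t x) * wxx w t x = -lam * wt w t x)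
    (hinit : ∫ x, wt w 0 x = 0)
    (_hint_w : ∀ t ∈ Ico 0 T, Integrable (w t))
    (hint_wt : ∀ t ∈ Ico 0 T, Integrable (wt w t))
    (hint_flux : ∀ t ∈ Ico 0 T, Integrable (deriv fun x => F (wx w t x)))
    (hmass : ∀ t ∈ Ico 0 T,
      HasDerivWithinAt (fun s => ∫ x, w s x) (∫ x, wt w t x) (Ico 0 T) t)
    (hmomentum : ∀ t ∈ Ico 0 T,
      HasDerivWithinAt (fun s => ∫ x, wt w s x) (∫ x, wtt w t x) (Ico 0 T) t)
    (hlim : ∀ t ∈ Ico 0 T, ∃ c, Tendsto (fun x => F (wx w t x)) atTop (nhds c) ∧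
      Tendsto (fun x => F (wx w t x)) atBot (nhds c)) :
    ∀ t ∈ Ico 0 T, ∫ x, w t x = ∫ x, w 0 x := by
  have hdecay : ∀ t ∈ Ico 0 T, ∫ x, wtt w t x = -lam * ∫ x, wt w t x := fun t ht =>
    have ⟨_, htop, hbot⟩ := hlim t ht
    integral_wtt_eq_neg_mul_integral_wt (contDiff_slice hreg ht) hF (hpde t ht) (hint_wt t ht)
      (hint_flux t ht) htop hbot
  have hmomentum_zero : ∀ t ∈ Ico 0 T, ∫ x, wt w t x = 0 :=
    eq_zero_of_hasDerivWithinAt_smul_self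
      (fun t ht => (hmomentum t ht).congr_deriv (hdecay t ht)) hinit
  intro t ht
  exact eq_of_hasDerivWithinAt_zero (convex_Ico 0 T)
    (fun s hs => (hmass s hs).congr_deriv (hmomentum_zero s hs))
    (left_mem_Ico.2 (ht.1.trans_lt ht.2)) ht

/-- The flux `ξ + ξ³/3` of the twist-wave equation: the primitive of `Q² = 1 + ξ²` vanishing at
`0`. -/
def twistFlux (ξ : ℝ) : ℝ := ξ + (1/3) * ξ^3

theorem hasDerivAt_twistFlux (ξ : ℝ) : HasDerivAt twistFlux (1 + ξ^2) ξ :=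
  ((hasDerivAt_id ξ).add ((hasDerivAt_pow 3 ξ).const_mul (1/3))).congr_deriv (by ring)

theorem twistFlux_eq_mul (ξ : ℝ) : twistFlux ξ = ξ * (1 + (1/3) * ξ^2) := by
  rw [twistFlux]; ring

/-- mass conservation `M(t) = M(0)` for `C²` solutions of the damped
quasilinear wave equation with zero initial velocity, provided the relevant
integrabilities hold, `M` is twice differentiable with the expected derivatives, and
the limits at `±∞` of `∂ₓw·(1+(1/3)(∂ₓw)²)` exist and coincide. -/
theorem mass_conservation
    (lam T : ℝ) (hlam : 0 < lam)
    (w : ℝ → ℝ → ℝ)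
    (hreg : ContDiffOn ℝ 2 (Function.uncurry w) (Set.Ico 0 T ×ˢ (Set.univ : Set ℝ)))
    (hpde : ∀ t ∈ Set.Ico (0:ℝ) T, ∀ x : ℝ,
      wtt w t x - (1 + (wx w t x)^2) * wxx w t x = -lam * wt w t x)
    (hinit' : ∀ x : ℝ, wt w 0 x = 0)
    (hint₀ : ∀ t ∈ Set.Ico (0:ℝ) T, Integrable (fun x => w t x))
    (hint₁ : ∀ t ∈ Set.Ico (0:ℝ) T, Integrable (fun x => wt w t x))
    (hint₂ : ∀ t ∈ Set.Ico (0:ℝ) T, Integrable (fun x => wtt w t x))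
    (hint₃ : ∀ t ∈ Set.Ico (0:ℝ) T, Integrable (fun x =>
      deriv (fun y => wx w t y + (1/3) * (wx w t y)^3) x))
    (M : ℝ → ℝ)
    (hM : ∀ t : ℝ, M t = ∫ x : ℝ, w t x)
    (hM' : ∀ t ∈ Set.Ico (0:ℝ) T, HasDerivAt M (∫ x : ℝ, wt w t x) t)
    (hM'' : ∀ t ∈ Set.Ico (0:ℝ) T,
      HasDerivAt (fun s => ∫ x : ℝ, wt w s x) (∫ x : ℝ, wtt w t x) t)
    (hlim : ∀ t ∈ Set.Ico (0:ℝ) T, ∃ c : ℝ,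
      Filter.Tendsto (fun x => wx w t x * (1 + (1/3) * (wx w t x)^2))
        Filter.atTop (nhds c) ∧
      Filter.Tendsto (fun x => wx w t x * (1 + (1/3) * (wx w t x)^2))
        Filter.atBot (nhds c)) :
    ∀ t ∈ Set.Ico (0:ℝ) T, M t = M 0 := by
  obtain rfl : M = fun t => ∫ x, w t x := funext hM
  exact mass_conservation_general hasDerivAt_twistFlux hreg hpde
    (by simp only [hinit', integral_zero]) hint₀ hint₁ hint₃
    (fun t ht => (hM' t ht).hasDerivWithinAt)
    (fun t ht => (hM'' t ht).hasDerivWithinAt) (by simpa only [twistFlux_eq_mul] using hlim)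
end
end

section
/- Let λ > 0 and let r, ℓ : [0,T) × ℝ → ℝ be a C¹ solution of the diagonal system with initial data r(0,·) = r₀ = −ℓ(0,·), where r₀ is bounded and C¹ with bounded derivative, and assume |r(t,x) − ℓ(t,y)| ≤ 2·sup|r₀| for all t ∈ [0,T) and x, y ∈ ℝ. Assume the characteristic flows (t,α) ↦ x₁(t,α) and (t,β) ↦ x₂(t,β) are C¹ jointly in both variables with ∂_α x₁ > 0 and ∂_β x₂ > 0. Then for every fixed α ∈ ℝ and t ∈ [0,T), the equation x₁(t,α) = x₂(t,β) has a unique solution β = β(t,α); the map t ↦ β(t,α) is C¹ and strictly increasing, with ∂ₜβ(t,α) = 2·k(η(t, x₁(t,α))) / c₂(t, β(t,α)) > 0 where c₂ = ∂_β x₂; moreover α ≤ β(t,α) ≤ α + 2δt, where δ := k(2·sup|r₀|). Symmetrically, for fixed β the equation x₂(t,β) = x₁(t,α) has a unique solution α = α(t,β), which is C¹ and strictly decreasing in t with ∂ₜα(t,β) = −2·k(η(t, x₂(t,β)))/c₁(t, α(t,β)) < 0, and β − 2δt ≤ α(t,β) ≤ β. -/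
open Real Set Filter MeasureTheory

noncomputable section

/-- `η(t,x) = r(t,x) − ℓ(t,x)`. -/
def etafun (r l : ℝ → ℝ → ℝ) (t x : ℝ) : ℝ := r t x - l t x

/-- Weighted Riemann derivative `p(t,x) = A(t)·√(k(η(t,x)))·∂ₓr(t,x)`. -/
def pfun (lam : ℝ) (r l : ℝ → ℝ → ℝ) (t x : ℝ) : ℝ :=
  Afun lam t * Real.sqrt (kfun (etafun r l t x)) * deriv (fun y => r t y) x

/-- Weighted Riemann derivative `q(t,x) = A(t)·√(k(η(t,x)))·∂ₓℓ(t,x)`. -/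
def qfun (lam : ℝ) (r l : ℝ → ℝ → ℝ) (t x : ℝ) : ℝ :=
  Afun lam t * Real.sqrt (kfun (etafun r l t x)) * deriv (fun y => l t y) x

/-!
Both correspondence maps solve `Y t (g t) = y t`, where `Y` is one characteristic flow and `y` is a
single characteristic of the other family. Each `Y t` is an increasing bijection of `ℝ`: its
derivative is positive and it moves points by at most `δ t`. The solution `g` is continuous because
`b < g t ↔ Y t b < y t`, and a continuous solution is differentiable by the easy half of the
implicit function theorem, which holds relative to `[0, T) × ℝ` and so covers the boundary `t = 0`.
Differentiating the equation gives `(y' - ∂ₜY) / ∂_b Y`, where the two speeds are opposite because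
they are taken at the same point. Characteristics starting at `α` and `β` drift towards each other
at speed at most `δ` each, so `0 ≤ β - α ≤ 2 δ t` when they meet.
-/

section ImplicitCurve

open scoped Topology

variable {𝕜 E F G : Type*} [NontriviallyNormedField 𝕜]
  [NormedAddCommGroup E] [NormedSpace 𝕜 E] [NormedAddCommGroup F] [NormedSpace 𝕜 F]
  [NormedAddCommGroup G] [NormedSpace 𝕜 G]

lemma continuousOn_of_strictMono_of_apply_eq {X α β : Type*} [TopologicalSpace X]
    [LinearOrder α] [TopologicalSpace α] [OrderTopology α]
    [LinearOrder β] [TopologicalSpace β] [OrderClosedTopology β]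
    {s : Set X} {Y : X → α → β} {y : X → β} {g : X → α}
    (hmono : ∀ t ∈ s, StrictMono (Y t)) (hY : ∀ b, ContinuousOn (fun t => Y t b) s)
    (hy : ContinuousOn y s) (hg : ∀ t ∈ s, Y t (g t) = y t) : ContinuousOn g s := by
  intro t ht
  refine tendsto_order.mpr ⟨fun b hb => ?_, fun b hb => ?_⟩
  · have hlt : Y t b < y t := hg t ht ▸ hmono t ht hb
    filter_upwards [(hY b t ht).eventually_lt (hy t ht) hlt, self_mem_nhdsWithin] with u hu hus
    exact (hmono u hus).lt_iff_lt.mp (hu.trans_eq (hg u hus).symm)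
  · have hlt : y t < Y t b := hg t ht ▸ hmono t ht hb
    filter_upwards [(hy t ht).eventually_lt (hY b t ht) hlt, self_mem_nhdsWithin] with u hu hus
    exact (hmono u hus).lt_iff_lt.mp ((hg u hus).trans_lt hu)

lemma hasFDerivAt_right_of_uncurry {Y : E → F → G} {Y' : E × F →L[𝕜] G} {s : Set E} {t : E} {b : F}
    (hY : HasFDerivWithinAt (Function.uncurry Y) Y' (s ×ˢ univ) (t, b)) (ht : t ∈ s) :
    HasFDerivAt (Y t) (Y' ∘L .inr 𝕜 E F) b :=
  hasFDerivWithinAt_univ.mp <|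
    hY.comp b (hasFDerivAt_prodMk_right t b).hasFDerivWithinAt fun _ _ => ⟨ht, trivial⟩

lemma hasFDerivWithinAt_left_of_uncurry {Y : E → F → G} {Y' : E × F →L[𝕜] G} {s : Set E} {t : E}
    {b : F} (hY : HasFDerivWithinAt (Function.uncurry Y) Y' (s ×ˢ univ) (t, b)) :
    HasFDerivWithinAt (fun u => Y u b) (Y' ∘L .inl 𝕜 E F) s t :=
  HasFDerivWithinAt.comp (f := fun u => (u, b)) t hY (hasFDerivAt_prodMk_left t b).hasFDerivWithinAt
    fun _ hu => ⟨hu, trivial⟩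

/- `u ↦ (u, g u)` composed with `(u, b) ↦ (u, Y u b)` is the differentiable map `u ↦ (u, y u)`,
and the derivative of the second factor has a continuous left inverse. -/
lemma hasFDerivWithinAt_of_apply_eq {Y : E → F → G} {Y' : E × F →L[𝕜] G} {A : G →L[𝕜] F}
    {y : E → G} {y' : E →L[𝕜] G} {g : E → F} {s : Set E} {t : E} (ht : t ∈ s)
    (hY : HasFDerivWithinAt (Function.uncurry Y) Y' (s ×ˢ univ) (t, g t))
    (hA : Function.LeftInverse A (Y' ∘L .inr 𝕜 E F)) (hy : HasFDerivWithinAt y y' s t)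
    (hg : ContinuousWithinAt g s t) (heq : ∀ u ∈ s, Y u (g u) = y u) :
    HasFDerivWithinAt g (A ∘L (y' - Y' ∘L .inl 𝕜 E F)) s t := by
  have hgraph : Tendsto (fun u => (u, g u)) (𝓝[s] t) (𝓝[s ×ˢ univ] (t, g t)) :=
    (continuousWithinAt_id.prodMk hg).tendsto_nhdsWithin fun u hu => ⟨hu, trivial⟩
  have hΦ : HasFDerivWithinAt (fun p : E × F => (p.1, Function.uncurry Y p))
      ((ContinuousLinearMap.fst 𝕜 E F).prod Y') (s ×ˢ univ) (t, g t) :=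
    hasFDerivWithinAt_fst.prodMk hY
  have hΦg : (fun p : E × F => (p.1, Function.uncurry Y p)) ∘ (fun u => (u, g u))
      =ᶠ[𝓝[s] t] fun u => (u, y u) := by
    filter_upwards [self_mem_nhdsWithin] with u hu
    exact Prod.ext rfl (heq u hu)
  let Φ'symm : E × G →L[𝕜] E × F :=
    (ContinuousLinearMap.fst 𝕜 E G).prod
      (A ∘L (.snd 𝕜 E G - Y' ∘L .inl 𝕜 E F ∘L .fst 𝕜 E G))
  have hleft : Function.LeftInverse Φ'symm ((ContinuousLinearMap.fst 𝕜 E F).prod Y') := by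
    rintro ⟨u, b⟩
    have hsplit : Y' (u, b) - Y' (u, 0) = Y' (0, b) := by simp [← map_sub]
    exact Prod.ext rfl ((congrArg A hsplit).trans (hA b))
  exact (hΦ.of_comp_of_leftInverse hgraph ((hasFDerivWithinAt_id t s).prodMk hy) hΦg hleft ht).snd

variable {s : Set ℝ} {Y : ℝ → ℝ → ℝ} {y g : ℝ → ℝ}

lemma hasDerivWithinAt_of_apply_eq {v c y' t : ℝ} (hs : UniqueDiffOn ℝ s) (ht : t ∈ s)
    (hY : DifferentiableWithinAt ℝ (Function.uncurry Y) (s ×ˢ univ) (t, g t))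
    (hYt : HasDerivWithinAt (fun u => Y u (g t)) v s t) (hYb : HasDerivAt (Y t) c (g t))
    (hc : c ≠ 0) (hy : HasDerivWithinAt y y' s t) (hg : ContinuousWithinAt g s t)
    (heq : ∀ u ∈ s, Y u (g u) = y u) : HasDerivWithinAt g ((y' - v) / c) s t := by
  obtain ⟨Y', hY'⟩ := hY
  have hv : Y' ∘L .inl ℝ ℝ ℝ = .toSpanSingleton ℝ v :=
    (hs t ht).eq (hasFDerivWithinAt_left_of_uncurry hY') hYt.hasFDerivWithinAt
  have hc' : Y' ∘L .inr ℝ ℝ ℝ = .toSpanSingleton ℝ c :=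
    (hasFDerivAt_right_of_uncurry hY' ht).unique hYb.hasFDerivAt
  have hleft : Function.LeftInverse (.toSpanSingleton ℝ c⁻¹ : ℝ →L[ℝ] ℝ) (Y' ∘L .inr ℝ ℝ ℝ) := by
    intro b
    simp [hc', hc]
  have hgd := (hasFDerivWithinAt_of_apply_eq ht hY' hleft hy.hasFDerivWithinAt hg
    heq).hasDerivWithinAt
  simpa [hv, div_eq_mul_inv, sub_mul] using hgd

lemma contDiffOn_one_of_apply_eq (hs : UniqueDiffOn ℝ s)
    (hY : ContDiffOn ℝ 1 (Function.uncurry Y) (s ×ˢ univ))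
    (hYne : ∀ t ∈ s, deriv (Y t) (g t) ≠ 0) (hy : ContDiffOn ℝ 1 y s)
    (hg : ContinuousOn g s) (heq : ∀ t ∈ s, Y t (g t) = y t) : ContDiffOn ℝ 1 g s := by
  let Y' : ℝ → ℝ × ℝ →L[ℝ] ℝ := fun t =>
    fderivWithin ℝ (Function.uncurry Y) (s ×ˢ univ) (t, g t)
  have hYd : ∀ t ∈ s, HasFDerivWithinAt (Function.uncurry Y) (Y' t) (s ×ˢ univ) (t, g t) :=
    fun t ht => (hY.differentiableOn one_ne_zero _ ⟨ht, trivial⟩).hasFDerivWithinAt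
  have hY'c : ContinuousOn Y' s :=
    (hY.continuousOn_fderivWithin (hs.prod uniqueDiffOn_univ) le_rfl).comp
      (continuousOn_id.prodMk hg) fun t ht => ⟨ht, trivial⟩
  have hYt : ∀ t ∈ s, HasDerivWithinAt (fun u => Y u (g t)) (Y' t (1, 0)) s t :=
    fun t ht => (hasFDerivWithinAt_left_of_uncurry (hYd t ht)).hasDerivWithinAt
  have hYb : ∀ t ∈ s, HasDerivAt (Y t) (Y' t (0, 1)) (g t) :=
    fun t ht => (hasFDerivAt_right_of_uncurry (hYd t ht) ht).hasDerivAt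
  have hY'ne : ∀ t ∈ s, Y' t (0, 1) ≠ 0 := fun t ht => (hYb t ht).deriv ▸ hYne t ht
  have hgd : ∀ t ∈ s, HasDerivWithinAt g ((derivWithin y s t - Y' t (1, 0)) / Y' t (0, 1)) s t :=
    fun t ht => hasDerivWithinAt_of_apply_eq hs ht (hYd t ht).differentiableWithinAt (hYt t ht)
      (hYb t ht) (hY'ne t ht) (hy.differentiableOn one_ne_zero t ht).hasDerivWithinAt (hg t ht) heq
  refine (contDiffOn_one_iff_derivWithin hs).mpr
    ⟨fun t ht => (hgd t ht).differentiableWithinAt, ?_⟩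
  refine ContinuousOn.congr ?_ fun t ht => (hgd t ht).derivWithin (hs t ht)
  exact ((hy.continuousOn_derivWithin hs le_rfl).sub (hY'c.clm_apply continuousOn_const)).div
    (hY'c.clm_apply continuousOn_const) hY'ne

end ImplicitCurve

lemma exists_eqOn_hasDerivAt_of_hasDerivWithinAt_Ico {F : Type*} [NormedAddCommGroup F]
    [NormedSpace ℝ F] {a b : ℝ} {g g' : ℝ → F}
    (hg : ∀ t ∈ Ico a b, HasDerivWithinAt g (g' t) (Ico a b) t) :
    ∃ f : ℝ → F, EqOn f g (Ico a b) ∧ ∀ t ∈ Ico a b, HasDerivAt f (g' t) t := by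
  let f : ℝ → F := fun t => g (max t a) + (min t a - a) • g' a
  have hfg : EqOn f g (Ico a b) := fun t ht => by simp [f, ht.1]
  refine ⟨f, hfg, fun t ht => ?_⟩
  have hright : HasDerivWithinAt f (g' t) (Ico a b) t := (hg t ht).congr hfg (hfg ht)
  rcases ht.1.eq_or_lt with rfl | hat
  · have htangent : HasDerivAt (fun t => g a + (t - a) • g' a) (g' a) a := by
      simpa using (((hasDerivAt_id a).sub_const a).smul_const (g' a)).const_add (g a)
    have hleft : HasDerivWithinAt f (g' a) (Iic a) a :=
      htangent.hasDerivWithinAt.congr (fun t ht => by simp [f, mem_Iic.mp ht]) (by simp [f])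
    refine (hleft.union hright).hasDerivAt ?_
    rw [Iic_union_Ico_eq_Iio ht.2]
    exact Iio_mem_nhds ht.2
  · exact hright.hasDerivAt (Ico_mem_nhds hat ht.2)

lemma surjective_of_continuous_of_abs_sub_le {f : ℝ → ℝ} (hf : Continuous f) {C : ℝ}
    (hC : ∀ x, |f x - x| ≤ C) : Function.Surjective f :=
  hf.surjective
    (tendsto_atTop_mono (fun x => by linarith [(abs_le.mp (hC x)).1])
      (tendsto_atTop_add_const_right atTop (-C) tendsto_id : Tendsto (fun x => x + -C) atTop atTop))
    (tendsto_atBot_mono (fun x => by linarith [(abs_le.mp (hC x)).2])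
      (tendsto_atBot_add_const_right atBot C tendsto_id : Tendsto (fun x => x + C) atBot atBot))

/-- `x t a` is the position at time `t ∈ [0, T)` of the characteristic of the speed field `v`
starting at `a`, and the flow `x` is jointly `C¹` and strictly increasing in `a` to first order.
Forward characteristics have speed `k ∘ η`, backward ones `-(k ∘ η)`. -/
structure IsCharacteristicFlow (T : ℝ) (v x : ℝ → ℝ → ℝ) : Prop where
  contDiffOn : ContDiffOn ℝ 1 (Function.uncurry x) (Ico 0 T ×ˢ univ)
  initial : ∀ a, x 0 a = a
  hasDerivAt : ∀ a, ∀ t ∈ Ico 0 T, HasDerivAt (fun s => x s a) (v t (x t a)) t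
  deriv_pos : ∀ t ∈ Ico 0 T, ∀ a, 0 < deriv (fun a' => x t a') a

namespace IsCharacteristicFlow

variable {T δ t : ℝ} {v w x y : ℝ → ℝ → ℝ}

lemma contDiffOn_curve (hx : IsCharacteristicFlow T v x) (a : ℝ) :
    ContDiffOn ℝ 1 (fun t => x t a) (Ico 0 T) :=
  hx.contDiffOn.comp (contDiff_id.prodMk contDiff_const).contDiffOn fun _ ht => ⟨ht, trivial⟩

lemma strictMono (hx : IsCharacteristicFlow T v x) (ht : t ∈ Ico 0 T) : StrictMono (x t) :=
  strictMono_of_deriv_pos (hx.deriv_pos t ht)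

lemma continuous (hx : IsCharacteristicFlow T v x) (ht : t ∈ Ico 0 T) : Continuous (x t) :=
  continuous_iff_continuousAt.mpr fun a =>
    (differentiableAt_of_deriv_ne_zero (hx.deriv_pos t ht a).ne').continuousAt

lemma add_mul_le (hx : IsCharacteristicFlow T v x) {m : ℝ}
    (hv : ∀ t ∈ Ico 0 T, ∀ z, m ≤ v t z) (ht : t ∈ Ico 0 T) (a : ℝ) : a + m * t ≤ x t a := by
  have hmean := (convex_Ico 0 T).mul_sub_le_image_sub_of_le_deriv
    (hx.contDiffOn_curve a).continuousOn
    (fun s hs => (hx.hasDerivAt a s (interior_subset hs)).differentiableAt.differentiableWithinAt)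
    (fun s hs => (hx.hasDerivAt a s (interior_subset hs)).deriv ▸ hv s (interior_subset hs) _)
    0 ⟨le_rfl, ht.1.trans_lt ht.2⟩ t ht ht.1
  rw [hx.initial] at hmean
  linarith

lemma le_add_mul (hx : IsCharacteristicFlow T v x) {M : ℝ}
    (hv : ∀ t ∈ Ico 0 T, ∀ z, v t z ≤ M) (ht : t ∈ Ico 0 T) (a : ℝ) : x t a ≤ a + M * t := by
  have hmean := (convex_Ico 0 T).image_sub_le_mul_sub_of_deriv_le
    (hx.contDiffOn_curve a).continuousOn
    (fun s hs => (hx.hasDerivAt a s (interior_subset hs)).differentiableAt.differentiableWithinAt)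
    (fun s hs => (hx.hasDerivAt a s (interior_subset hs)).deriv ▸ hv s (interior_subset hs) _)
    0 ⟨le_rfl, ht.1.trans_lt ht.2⟩ t ht ht.1
  rw [hx.initial] at hmean
  linarith

lemma surjective (hx : IsCharacteristicFlow T v x) (hv : ∀ t ∈ Ico 0 T, ∀ z, |v t z| ≤ δ)
    (ht : t ∈ Ico 0 T) : Function.Surjective (x t) := by
  refine surjective_of_continuous_of_abs_sub_le (hx.continuous ht) (C := δ * t) fun a => ?_
  have hlower := hx.add_mul_le (fun s hs z => (abs_le.mp (hv s hs z)).1) ht a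
  have hupper := hx.le_add_mul (fun s hs z => (abs_le.mp (hv s hs z)).2) ht a
  exact abs_le.mpr ⟨by linarith, by linarith⟩

theorem exists_correspondence (hx : IsCharacteristicFlow T v x) (hy : IsCharacteristicFlow T w y)
    (hw : ∀ t ∈ Ico 0 T, ∀ z, |w t z| ≤ δ) (a : ℝ) :
    ∃ g : ℝ → ℝ, (∀ t ∈ Ico 0 T, x t a = y t (g t) ∧ ∀ b, x t a = y t b → b = g t) ∧
      ContDiffOn ℝ 1 g (Ico 0 T) ∧
      ∀ t ∈ Ico 0 T, HasDerivAt g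
        ((v t (x t a) - w t (x t a)) / deriv (fun b => y t b) (g t)) t := by
  have hsol : ∀ t ∈ Ico 0 T, ∃ b, y t b = x t a := fun t ht => hy.surjective hw ht _
  choose! g hg using hsol
  have hs : UniqueDiffOn ℝ (Ico 0 T) := uniqueDiffOn_Ico 0 T
  have hgc : ContinuousOn g (Ico 0 T) :=
    continuousOn_of_strictMono_of_apply_eq (fun t ht => hy.strictMono ht)
      (fun b => (hy.contDiffOn_curve b).continuousOn) (hx.contDiffOn_curve a).continuousOn hg
  have hgC1 : ContDiffOn ℝ 1 g (Ico 0 T) :=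
    contDiffOn_one_of_apply_eq hs hy.contDiffOn (fun t ht => (hy.deriv_pos t ht _).ne')
      (hx.contDiffOn_curve a) hgc hg
  have hgd : ∀ t ∈ Ico 0 T, HasDerivWithinAt g
      ((v t (x t a) - w t (x t a)) / deriv (fun b => y t b) (g t)) (Ico 0 T) t := by
    intro t ht
    have hvel : HasDerivWithinAt (fun u => y u (g t)) (w t (x t a)) (Ico 0 T) t :=
      hg t ht ▸ (hy.hasDerivAt (g t) t ht).hasDerivWithinAt
    have hpos := hy.deriv_pos t ht (g t)
    exact hasDerivWithinAt_of_apply_eq hs ht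
      (hy.contDiffOn.differentiableOn one_ne_zero _ ⟨ht, trivial⟩) hvel
      (differentiableAt_of_deriv_ne_zero hpos.ne').hasDerivAt hpos.ne'
      (hx.hasDerivAt a t ht).hasDerivWithinAt (hgc t ht) hg
  obtain ⟨f, hfg, hf⟩ := exists_eqOn_hasDerivAt_of_hasDerivWithinAt_Ico hgd
  refine ⟨f, fun t ht => ?_, hgC1.congr hfg, fun t ht => hfg ht ▸ hf t ht⟩
  rw [hfg ht]
  exact ⟨(hg t ht).symm, fun b hb => (hy.strictMono ht).injective (hb.symm.trans (hg t ht).symm)⟩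

lemma le_and_le_add_of_meet (hx : IsCharacteristicFlow T v x)
    (hy : IsCharacteristicFlow T (fun t z => -v t z) y)
    (hv : ∀ t ∈ Ico 0 T, ∀ z, 0 ≤ v t z ∧ v t z ≤ δ) (ht : t ∈ Ico 0 T) {a b : ℝ}
    (hmeet : x t a = y t b) : a ≤ b ∧ b ≤ a + 2 * δ * t := by
  have hx_lower := hx.add_mul_le (fun s hs z => (hv s hs z).1) ht a
  have hx_upper := hx.le_add_mul (fun s hs z => (hv s hs z).2) ht a
  have hy_lower := hy.add_mul_le (fun s hs z => neg_le_neg (hv s hs z).2) ht b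
  have hy_upper := hy.le_add_mul (fun s hs z => neg_nonpos.mpr (hv s hs z).1) ht b
  constructor <;> linarith

end IsCharacteristicFlow

lemma hasDerivAt_Lfun (u : ℝ) : HasDerivAt Lfun (√(1 + u ^ 2)) u := by
  have hpos : 0 < 1 + u ^ 2 := by positivity
  have hsqrt : HasDerivAt (fun u : ℝ => √(1 + u ^ 2)) (u / √(1 + u ^ 2)) u := by
    refine (((hasDerivAt_pow 2 u).const_add 1).sqrt hpos.ne').congr_deriv ?_
    field
  have hL := (((hasDerivAt_id u).mul hsqrt).add (Real.hasDerivAt_arsinh u)).const_mul (1 / 2)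
  refine hL.congr_deriv ?_
  have hne : √(1 + u ^ 2) ≠ 0 := (Real.sqrt_pos.mpr hpos).ne'
  have hsq : √(1 + u ^ 2) ^ 2 = 1 + u ^ 2 := Real.sq_sqrt hpos.le
  simp only [id]
  field_simp
  linear_combination -hsq

lemma Lfun_strictMono : StrictMono Lfun :=
  strictMono_of_hasDerivAt_pos hasDerivAt_Lfun fun _ => Real.sqrt_pos.mpr (by positivity)

lemma Lfun_neg (u : ℝ) : Lfun (-u) = -Lfun u := by
  simp only [Lfun, Real.arsinh_neg, neg_sq]
  ring

lemma le_Lfun {u : ℝ} (hu : 0 ≤ u) : u ≤ Lfun u := by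
  have hmean := mul_sub_le_image_sub_of_le_deriv
    (fun u => (hasDerivAt_Lfun u).differentiableAt) (C := 1)
    (fun u => (hasDerivAt_Lfun u).deriv ▸ Real.one_le_sqrt.mpr (by nlinarith)) hu
  have hzero : Lfun 0 = 0 := by simp [Lfun]
  linarith

lemma Lfun_surjective : Function.Surjective Lfun := by
  have hcont : Continuous Lfun :=
    continuous_iff_continuousAt.mpr fun u => (hasDerivAt_Lfun u).continuousAt
  have htop : Tendsto Lfun atTop atTop :=
    tendsto_atTop_mono' atTop ((eventually_ge_atTop 0).mono fun _ hu => le_Lfun hu) tendsto_id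
  have hbot : Tendsto Lfun atBot atBot := by
    have hneg := tendsto_neg_atTop_atBot.comp (htop.comp tendsto_neg_atBot_atTop)
    exact hneg.congr fun u => by simp [Lfun_neg]
  exact hcont.surjective htop hbot

lemma Lfun_u1hat (η : ℝ) : Lfun (u1hat η) = -η / 2 :=
  Function.rightInverse_invFun Lfun_surjective _

lemma u1hat_neg (η : ℝ) : u1hat (-η) = -u1hat η := by
  apply Lfun_strictMono.injective
  rw [Lfun_neg, Lfun_u1hat, Lfun_u1hat]
  ring

lemma u1hat_antitone : Antitone u1hat := by
  intro η M h
  rw [← Lfun_strictMono.le_iff_le, Lfun_u1hat, Lfun_u1hat]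
  linarith

lemma kfun_pos (η : ℝ) : 0 < kfun η := Real.sqrt_pos.mpr (by positivity)

lemma kfun_le_kfun_of_abs_le {η M : ℝ} (h : |η| ≤ M) : kfun η ≤ kfun M := by
  have hu : |u1hat η| ≤ -u1hat M := by
    have hbounds := abs_le.mp h
    refine abs_le.mpr ⟨(neg_neg (u1hat M)).trans_le (u1hat_antitone hbounds.2), ?_⟩
    exact (u1hat_antitone hbounds.1).trans_eq (u1hat_neg M)
  exact Real.sqrt_le_sqrt (add_le_add_right (sq_le_sq.mpr (hu.trans (neg_le_abs _))) 1)

theorem correspondence_maps_between_characteristics_general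
    {T δ : ℝ} {v x₁ x₂ : ℝ → ℝ → ℝ} (hv : ∀ t ∈ Ico 0 T, ∀ z, 0 < v t z ∧ v t z ≤ δ)
    (h₁ : IsCharacteristicFlow T v x₁) (h₂ : IsCharacteristicFlow T (fun t z => -v t z) x₂) :
    ∃ bmap amap : ℝ → ℝ → ℝ,
      (∀ t ∈ Ico 0 T, ∀ a : ℝ,
        x₁ t a = x₂ t (bmap t a) ∧ (∀ b' : ℝ, x₁ t a = x₂ t b' → b' = bmap t a)) ∧
      (∀ a : ℝ, ContDiffOn ℝ 1 (fun t => bmap t a) (Ico 0 T) ∧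
        StrictMonoOn (fun t => bmap t a) (Ico 0 T)) ∧
      (∀ a : ℝ, ∀ t ∈ Ico 0 T,
        HasDerivAt (fun s => bmap s a)
          (2 * v t (x₁ t a) / deriv (fun b' => x₂ t b') (bmap t a)) t ∧
        0 < 2 * v t (x₁ t a) / deriv (fun b' => x₂ t b') (bmap t a) ∧
        a ≤ bmap t a ∧ bmap t a ≤ a + 2 * δ * t) ∧
      (∀ t ∈ Ico 0 T, ∀ b : ℝ,
        x₂ t b = x₁ t (amap t b) ∧ (∀ a' : ℝ, x₂ t b = x₁ t a' → a' = amap t b)) ∧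
      (∀ b : ℝ, ContDiffOn ℝ 1 (fun t => amap t b) (Ico 0 T) ∧
        StrictAntiOn (fun t => amap t b) (Ico 0 T)) ∧
      (∀ b : ℝ, ∀ t ∈ Ico 0 T,
        HasDerivAt (fun s => amap s b)
          (-(2 * v t (x₂ t b) / deriv (fun a' => x₁ t a') (amap t b))) t ∧
        -(2 * v t (x₂ t b) / deriv (fun a' => x₁ t a') (amap t b)) < 0 ∧
        b - 2 * δ * t ≤ amap t b ∧ amap t b ≤ b) := by
  have hv_nonneg : ∀ t ∈ Ico 0 T, ∀ z, 0 ≤ v t z ∧ v t z ≤ δ := fun t ht z =>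
    ⟨(hv t ht z).1.le, (hv t ht z).2⟩
  have hv_abs : ∀ t ∈ Ico 0 T, ∀ z, |v t z| ≤ δ := fun t ht z =>
    (abs_of_pos (hv t ht z).1).trans_le (hv t ht z).2
  choose β hβ hβC1 hβd using h₁.exists_correspondence h₂ fun t ht z =>
    (abs_neg (v t z)).trans_le (hv_abs t ht z)
  choose α hα hαC1 hαd using h₂.exists_correspondence h₁ hv_abs
  simp only [sub_neg_eq_add, ← two_mul] at hβd
  simp only [← neg_add', ← two_mul, neg_div] at hαd
  have hβpos : ∀ a, ∀ t ∈ Ico 0 T,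
      0 < 2 * v t (x₁ t a) / deriv (fun b' => x₂ t b') (β a t) := fun a t ht =>
    div_pos (mul_pos two_pos (hv t ht _).1) (h₂.deriv_pos t ht _)
  have hαneg : ∀ b, ∀ t ∈ Ico 0 T,
      -(2 * v t (x₂ t b) / deriv (fun a' => x₁ t a') (α b t)) < 0 := fun b t ht =>
    neg_neg_of_pos (div_pos (mul_pos two_pos (hv t ht _).1) (h₁.deriv_pos t ht _))
  have hβmono : ∀ a, StrictMonoOn (β a) (Ico 0 T) := fun a =>
    strictMonoOn_of_hasDerivWithinAt_pos (convex_Ico 0 T) (hβC1 a).continuousOn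
      (fun t ht => (hβd a t (interior_subset ht)).hasDerivWithinAt)
      fun t ht => hβpos a t (interior_subset ht)
  have hαanti : ∀ b, StrictAntiOn (α b) (Ico 0 T) := fun b =>
    strictAntiOn_of_hasDerivWithinAt_neg (convex_Ico 0 T) (hαC1 b).continuousOn
      (fun t ht => (hαd b t (interior_subset ht)).hasDerivWithinAt)
      fun t ht => hαneg b t (interior_subset ht)
  have hβle := fun a t ht => h₁.le_and_le_add_of_meet h₂ hv_nonneg ht (hβ a t ht).1
  have hαle := fun b t ht => h₁.le_and_le_add_of_meet h₂ hv_nonneg ht (hα b t ht).1.symm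
  exact ⟨fun t a => β a t, fun t b => α b t, fun t ht a => hβ a t ht,
    fun a => ⟨hβC1 a, hβmono a⟩, fun a t ht => ⟨hβd a t ht, hβpos a t ht, hβle a t ht⟩,
    fun t ht b => hα b t ht, fun b => ⟨hαC1 b, hαanti b⟩, fun b t ht =>
      ⟨hαd b t ht, hαneg b t ht, sub_le_iff_le_add.mpr (hαle b t ht).2, (hαle b t ht).1⟩⟩

/-- existence, uniqueness and properties of the correspondence maps
`β(t,α)` and `α(t,β)` between forward and backward characteristics: they are `C¹`,
strictly monotone in `t` with the stated derivative, and confined by the bounds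
`α ≤ β(t,α) ≤ α + 2δt` and `β − 2δt ≤ α(t,β) ≤ β`, where `δ = k(2·sup|r₀|)`. -/
theorem correspondence_maps_between_characteristics
    (lam T : ℝ) (hlam : 0 < lam)
    (r l : ℝ → ℝ → ℝ) (r₀ : ℝ → ℝ)
    (hreg_r : ContDiffOn ℝ 1 (Function.uncurry r) (Set.Ico 0 T ×ˢ (Set.univ : Set ℝ)))
    (hreg_l : ContDiffOn ℝ 1 (Function.uncurry l) (Set.Ico 0 T ×ˢ (Set.univ : Set ℝ)))
    (hsys_r : ∀ t ∈ Set.Ico (0:ℝ) T, ∀ x : ℝ,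
      deriv (fun s => r s x) t + kfun (etafun r l t x) * deriv (fun y => r t y) x
        = -(lam/2) * (r t x + l t x))
    (hsys_l : ∀ t ∈ Set.Ico (0:ℝ) T, ∀ x : ℝ,
      deriv (fun s => l s x) t - kfun (etafun r l t x) * deriv (fun y => l t y) x
        = -(lam/2) * (r t x + l t x))
    (hr0 : ∀ x : ℝ, r 0 x = r₀ x)
    (hl0 : ∀ x : ℝ, l 0 x = -r₀ x)
    (hr₀reg : ContDiff ℝ 1 r₀)
    (hr₀bdd : ∃ C : ℝ, ∀ x : ℝ, |r₀ x| ≤ C)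
    (hr₀'bdd : ∃ C : ℝ, ∀ x : ℝ, |deriv r₀ x| ≤ C)
    (hetabdd : ∀ t ∈ Set.Ico (0:ℝ) T, ∀ x y : ℝ,
      |r t x - l t y| ≤ 2 * ⨆ z : ℝ, |r₀ z|)
    (x₁ x₂ : ℝ → ℝ → ℝ)
    (hflowreg₁ : ContDiffOn ℝ 1 (Function.uncurry x₁) (Set.Ico 0 T ×ˢ (Set.univ : Set ℝ)))
    (hflowreg₂ : ContDiffOn ℝ 1 (Function.uncurry x₂) (Set.Ico 0 T ×ˢ (Set.univ : Set ℝ)))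
    (hx₁0 : ∀ a : ℝ, x₁ 0 a = a)
    (hx₁ : ∀ a : ℝ, ∀ t ∈ Set.Ico (0:ℝ) T,
      HasDerivAt (fun s => x₁ s a) (kfun (etafun r l t (x₁ t a))) t)
    (hx₂0 : ∀ b : ℝ, x₂ 0 b = b)
    (hx₂ : ∀ b : ℝ, ∀ t ∈ Set.Ico (0:ℝ) T,
      HasDerivAt (fun s => x₂ s b) (-(kfun (etafun r l t (x₂ t b)))) t)
    (hc₁pos : ∀ t ∈ Set.Ico (0:ℝ) T, ∀ a : ℝ, 0 < deriv (fun a' => x₁ t a') a)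
    (hc₂pos : ∀ t ∈ Set.Ico (0:ℝ) T, ∀ b : ℝ, 0 < deriv (fun b' => x₂ t b') b) :
    ∃ bmap amap : ℝ → ℝ → ℝ,
      -- existence and uniqueness of β(t,α)
      (∀ t ∈ Set.Ico (0:ℝ) T, ∀ a : ℝ,
        x₁ t a = x₂ t (bmap t a) ∧ (∀ b' : ℝ, x₁ t a = x₂ t b' → b' = bmap t a)) ∧
      -- regularity and strict monotonicity of t ↦ β(t,α)
      (∀ a : ℝ, ContDiffOn ℝ 1 (fun t => bmap t a) (Set.Ico 0 T) ∧
        StrictMonoOn (fun t => bmap t a) (Set.Ico 0 T)) ∧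
      -- derivative formula, positivity and bounds for β(t,α)
      (∀ a : ℝ, ∀ t ∈ Set.Ico (0:ℝ) T,
        HasDerivAt (fun s => bmap s a)
          (2 * kfun (etafun r l t (x₁ t a)) / deriv (fun b' => x₂ t b') (bmap t a)) t ∧
        0 < 2 * kfun (etafun r l t (x₁ t a)) / deriv (fun b' => x₂ t b') (bmap t a) ∧
        a ≤ bmap t a ∧ bmap t a ≤ a + 2 * kfun (2 * ⨆ z : ℝ, |r₀ z|) * t) ∧
      -- existence and uniqueness of α(t,β)
      (∀ t ∈ Set.Ico (0:ℝ) T, ∀ b : ℝ,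
        x₂ t b = x₁ t (amap t b) ∧ (∀ a' : ℝ, x₂ t b = x₁ t a' → a' = amap t b)) ∧
      -- regularity and strict antitonicity of t ↦ α(t,β)
      (∀ b : ℝ, ContDiffOn ℝ 1 (fun t => amap t b) (Set.Ico 0 T) ∧
        StrictAntiOn (fun t => amap t b) (Set.Ico 0 T)) ∧
      -- derivative formula, negativity and bounds for α(t,β)
      (∀ b : ℝ, ∀ t ∈ Set.Ico (0:ℝ) T,
        HasDerivAt (fun s => amap s b)
          (-(2 * kfun (etafun r l t (x₂ t b)) / deriv (fun a' => x₁ t a') (amap t b))) t ∧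
        -(2 * kfun (etafun r l t (x₂ t b)) / deriv (fun a' => x₁ t a') (amap t b)) < 0 ∧
        b - 2 * kfun (2 * ⨆ z : ℝ, |r₀ z|) * t ≤ amap t b ∧ amap t b ≤ b) := by
  exact correspondence_maps_between_characteristics_general
    (fun t ht z => ⟨kfun_pos _, kfun_le_kfun_of_abs_le (hetabdd t ht z z)⟩)
    ⟨hflowreg₁, hx₁0, hx₁, hc₁pos⟩ ⟨hflowreg₂, hx₂0, hx₂, hc₂pos⟩
end
end
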